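/- arXiv:2604.18782 — 2 statements merged into one kernel-verified Lean document; each statement's English description precedes it below -/
import Mathlib

section
/- Let d ≥ 2, n ≥ 1 and g ≥ 0 be integers, and let e : Fin n → ℕ satisfy 2 ≤ e i ≤ d for all i and ∑ i, e i = 2(g - 1 + d) + n (the Riemann–Hurwitz condition). Then there exist permutations σ_1, …, σ_n of Fin d such that: each σ_i is a cycle of length e i (i.e. σ_i.IsCycle and σ_i.support.card = e i); the product σ_n * ⋯ * σ_1 equals the identity; and the subgroup of Equiv.Perm (Fin d) generated by {σ_1, …, σ_n} acts transitively on Fin d (for all a b : Fin d there exists τ in the generated subgroup with τ a = b). -/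
namespace HurwitzAux

open Equiv Equiv.Perm

/-- The cycle type of a cycle of length `a + 1` (the identity when `a = 0`). -/
def CT (a : ℕ) : Multiset ℕ := if a = 0 then 0 else {a + 1}

lemma isCycle_of_CT {α : Type} [Fintype α] [DecidableEq α] {f : Perm α} {a : ℕ}
    (ha : a ≠ 0) (h : f.cycleType = CT a) : f.IsCycle ∧ f.support.card = a + 1 := by
  rw [CT, if_neg ha] at h
  refine ⟨card_cycleType_eq_one.1 (by simp [h]), ?_⟩
  rw [← sum_cycleType, h, Multiset.sum_singleton]

lemma CT_of_isCycle {α : Type} [Fintype α] [DecidableEq α] {f : Perm α} {a : ℕ}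
    (hf : f.IsCycle) (h : f.support.card = a + 1) : f.cycleType = CT a := by
  have := hf.two_le_card_support
  rw [hf.cycleType, CT, if_neg (by omega), h]

lemma eq_one_of_CT {α : Type} [Fintype α] [DecidableEq α] {f : Perm α}
    (h : f.cycleType = CT 0) : f = 1 := by
  simpa [CT] using h

/-- Inserting a new point into a cycle. -/
lemma addPt {α : Type} [Fintype α] [DecidableEq α] {f : Perm α} {a : ℕ} {x y : α}
    (h : f.cycleType = CT a) (hx : f x = x) (hxy : x ≠ y) (hy : f y ≠ y ∨ a = 0) :
    (swap x y * f).cycleType = CT (a + 1) := by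
  by_cases ha : a = 0
  · subst ha
    rw [eq_one_of_CT h, mul_one]
    exact CT_of_isCycle (isCycle_swap hxy) (card_support_swap hxy)
  · have hy : f y ≠ y := hy.resolve_right ha
    obtain ⟨hc, hcard⟩ := isCycle_of_CT ha h
    have hyS : y ∈ f.support := mem_support.2 hy
    have hcy : f.cycleOf y = f := hc.cycleOf_eq hy
    have h1 : List.formPerm (toList f y) = f := by rw [formPerm_toList, hcy]
    have hlen : (toList f y).length = a + 1 := by rw [length_toList, hcy, hcard]
    have h0 : (toList f y)[0]? = some y := by
      rw [List.getElem?_eq_getElem (length_toList_pos_of_mem_support f y hyS),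
        toList_getElem_zero f y hyS]
    have hnd := nodup_toList f y
    have hxn : x ∉ toList f y := by
      rw [mem_toList_iff]
      rintro ⟨hs, -⟩
      exact hy (hs.apply_eq_self_iff.2 hx)
    generalize toList f y = l at *
    cases l with
    | nil => simp at hlen
    | cons z l =>
      simp only [List.getElem?_cons_zero, Option.some.injEq] at h0
      subst h0
      have hnd' : (x :: z :: l).Nodup := List.nodup_cons.2 ⟨hxn, hnd⟩
      rw [← h1, ← List.formPerm_cons_cons]
      refine CT_of_isCycle (List.isCycle_formPerm hnd' (by simp)) ?_
      rw [List.support_formPerm_of_nodup _ hnd' (by simp), List.toFinset_card_of_nodup hnd']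
      simp only [List.length_cons] at hlen ⊢
      omega

lemma addPt' {α : Type} [Fintype α] [DecidableEq α] {f : Perm α} {a : ℕ} {x y : α}
    (h : f.cycleType = CT a) (hx : f x = x) (hxy : x ≠ y) (hy : f y ≠ y ∨ a = 0) :
    (f * swap x y).cycleType = CT (a + 1) := by
  rw [← cycleType_inv, mul_inv_rev, swap_inv]
  refine addPt (by rw [cycleType_inv, h]) ?_ hxy ?_
  · rw [Perm.inv_eq_iff_eq, hx]
  · refine hy.imp_left fun hy hh => hy ?_
    rw [Perm.inv_eq_iff_eq] at hh
    exact hh.symm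

/-- Triple of cycles with product one whose orbits are connected. -/
def Tri (α : Type) [Fintype α] [DecidableEq α] (a b c : ℕ) : Prop :=
  ∃ σ τ ρ : Perm α, σ.cycleType = CT a ∧ τ.cycleType = CT b ∧ ρ.cycleType = CT c ∧
    σ * τ * ρ = 1 ∧ ∀ r : α → α → Prop, Equivalence r → (∀ z, r z (σ z)) → (∀ z, r z (τ z)) →
      (∀ z, r z (ρ z)) → ∀ x y, r x y

lemma Tri.rotate {α : Type} [Fintype α] [DecidableEq α] {a b c : ℕ} (h : Tri α a b c) :
    Tri α b c a := by
  obtain ⟨σ, τ, ρ, h1, h2, h3, h4, h5⟩ := h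
  refine ⟨τ, ρ, σ, h2, h3, h1, ?_, fun r hr k1 k2 k3 => h5 r hr k3 k1 k2⟩
  rw [mul_assoc] at h4
  exact mul_eq_one_iff_eq_inv.2 (eq_inv_of_mul_eq_one_right h4)

lemma rel_pow {α : Type} {r : α → α → Prop} (hr : Equivalence r) {σ : Perm α}
    (h : ∀ z, r z (σ z)) (n : ℕ) (z : α) : r z ((σ ^ n) z) := by
  induction n with
  | zero => exact hr.refl z
  | succ k ih =>
    rw [pow_succ', Perm.mul_apply]
    exact hr.trans ih (h _)

lemma tri_base {α : Type} [Fintype α] [DecidableEq α] {m : ℕ} (hα : Fintype.card α = m + 1)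
    (hm : Even m) : Tri α m m m := by
  by_cases h0 : m = 0
  · subst h0
    have : Subsingleton α := Fintype.card_le_one_iff_subsingleton.1 (by omega)
    refine ⟨1, 1, 1, by simp [CT], by simp [CT], by simp [CT], by simp, fun r hr _ _ _ x y => ?_⟩
    rw [Subsingleton.elim x y]
    exact hr.refl y
  · obtain ⟨σ, hσ⟩ := (Equiv.Perm.exists_with_cycleType_iff α (m := CT m)).2
      (by simp [CT, h0, hα]; omega)
    obtain ⟨hc, hcard⟩ := isCycle_of_CT h0 hσ
    have hco : Nat.Coprime 2 (orderOf σ) := by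
      rw [hc.orderOf, hcard, Nat.coprime_two_left]
      exact hm.add_one
    have hs : σ.support = Finset.univ := Finset.eq_univ_of_card _ (by rw [hcard, hα])
    have hne : ∀ x, σ x ≠ x := fun x => mem_support.1 (by rw [hs]; simp)
    refine ⟨σ, σ, (σ ^ 2)⁻¹, hσ, hσ, ?_, by group, fun r hr h1 _ _ x y => ?_⟩
    · rw [cycleType_inv]
      exact CT_of_isCycle (hc.pow_iff.2 hco) (by rw [support_pow_coprime hco, hcard])
    · obtain ⟨i, rfl⟩ := hc.exists_pow_eq (hne x) (hne y)
      exact rel_pow hr h1 i x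

lemma exists_common {α : Type} [Fintype α] [DecidableEq α] [Nonempty α] {f g : Perm α} {a b : ℕ}
    (hf : f.cycleType = CT a) (hg : g.cycleType = CT b) (h : Fintype.card α < a + b + 2) :
    ∃ y, (f y ≠ y ∨ a = 0) ∧ (g y ≠ y ∨ b = 0) := by
  by_cases ha : a = 0
  · by_cases hb : b = 0
    · exact ⟨Classical.arbitrary α, Or.inr ha, Or.inr hb⟩
    · obtain ⟨y, hy, -⟩ := (isCycle_of_CT hb hg).1
      exact ⟨y, Or.inr ha, Or.inl hy⟩
  · by_cases hb : b = 0
    · obtain ⟨y, hy, -⟩ := (isCycle_of_CT ha hf).1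
      exact ⟨y, Or.inl hy, Or.inr hb⟩
    · have h1 := (isCycle_of_CT ha hf).2
      have h2 := (isCycle_of_CT hb hg).2
      have : ¬ Disjoint f.support g.support := by
        intro hd
        have := Finset.card_union_of_disjoint hd
        have := Finset.card_le_univ (f.support ∪ g.support)
        omega
      obtain ⟨y, hy1, hy2⟩ := Finset.not_disjoint_iff.1 this
      exact ⟨y, Or.inl (mem_support.1 hy1), Or.inl (mem_support.1 hy2)⟩

lemma tri_step {α : Type} [Fintype α] [DecidableEq α] (x : α) {a b c : ℕ}
    [Nonempty {y : α // y ≠ x}]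
    (hcard : Fintype.card {y : α // y ≠ x} < a + b + 2)
    (h : Tri {y : α // y ≠ x} a b c) : Tri α (a + 1) (b + 1) c := by
  obtain ⟨σ, τ, ρ, h1, h2, h3, h4, h5⟩ := h
  obtain ⟨y, hy1, hy2⟩ := exists_common h1 h2 hcard
  have hfix : ∀ f : Perm {y : α // y ≠ x}, ofSubtype f x = x := fun f =>
    ofSubtype_apply_of_not_mem f (by simp)
  have hxy : x ≠ y := y.2.symm
  have hmv : ∀ {f : Perm {y : α // y ≠ x}} {k : ℕ}, (f y ≠ y ∨ k = 0) →
      (ofSubtype f (y : α) ≠ y ∨ k = 0) := by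
    intro f k hk
    refine hk.imp_left fun hk => ?_
    rw [ofSubtype_apply_coe]
    exact fun hh => hk (Subtype.ext hh)
  refine ⟨ofSubtype σ * swap x y, swap x y * ofSubtype τ, ofSubtype ρ,
    addPt' (by rw [cycleType_ofSubtype, h1]) (hfix _) hxy (hmv hy1),
    addPt (by rw [cycleType_ofSubtype, h2]) (hfix _) hxy (hmv hy2),
    by rw [cycleType_ofSubtype, h3], ?_, ?_⟩
  · have : ofSubtype σ * swap x y * (swap x y * ofSubtype τ) * ofSubtype ρ
        = ofSubtype (σ * τ * ρ) := by
      rw [map_mul, map_mul, mul_assoc (ofSubtype σ), ← mul_assoc (swap x (y : α)), swap_mul_self,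
        one_mul]
    rw [this, h4, map_one]
  · intro r hr k1 k2 k3
    have kyx : r y x := by
      have := k1 y
      rwa [Perm.mul_apply, swap_apply_right, hfix] at this
    have kxs : r x (σ y) := by
      have := k1 x
      rwa [Perm.mul_apply, swap_apply_left, ofSubtype_apply_coe] at this
    have key : ∀ u v : {y : α // y ≠ x}, r u v := by
      refine h5 (fun u v => r u v) ⟨fun u => hr.refl _, fun h => hr.symm h,
        fun h h' => hr.trans h h'⟩ ?_ ?_ ?_
      · intro z
        by_cases hz : z = y
        · subst hz
          exact hr.trans kyx kxs
        · have := k1 z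
          rwa [Perm.mul_apply, swap_apply_of_ne_of_ne z.2 (fun hh => hz (Subtype.ext hh)),
            ofSubtype_apply_coe] at this
      · intro z
        have := k2 z
        rw [Perm.mul_apply, ofSubtype_apply_coe] at this
        by_cases hz : τ z = y
        · rw [hz] at this ⊢
          rw [swap_apply_right] at this
          exact hr.trans this (hr.symm kyx)
        · rwa [swap_apply_of_ne_of_ne (τ z).2 (fun hh => hz (Subtype.ext hh))] at this
      · intro z
        have := k3 z
        rwa [ofSubtype_apply_coe] at this
    have key2 : ∀ u, r u y := by
      intro u
      by_cases hu : u = x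
      · rw [hu]
        exact hr.symm kyx
      · exact key ⟨u, hu⟩ y
    exact fun u v => hr.trans (key2 u) (hr.symm (key2 v))

lemma tri_core : ∀ m : ℕ, ∀ (α : Type) [Fintype α] [DecidableEq α], Fintype.card α = m + 1 →
    ∀ a b c : ℕ, a ≤ m → b ≤ m → c ≤ m → Even (a + b + c) → 2 * m ≤ a + b + c →
    Tri α a b c := by
  intro m
  induction m with
  | zero =>
    intro α _ _ hα a b c ha hb hc _ _
    obtain rfl : a = 0 := by omega
    obtain rfl : b = 0 := by omega
    obtain rfl : c = 0 := by omega
    exact tri_base hα (by simp)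
  | succ m ih =>
    intro α _ _ hα
    have main : ∀ a b c : ℕ, a ≤ m + 1 → b ≤ m + 1 → c ≤ m → Even (a + b + c) →
        2 * (m + 1) ≤ a + b + c → Tri α a b c := by
      intro a b c ha hb hc he hs
      obtain ⟨a, rfl⟩ : ∃ k, a = k + 1 := ⟨a - 1, by omega⟩
      obtain ⟨b, rfl⟩ : ∃ k, b = k + 1 := ⟨b - 1, by omega⟩
      obtain ⟨x⟩ : Nonempty α := Fintype.card_pos_iff.1 (by omega)
      have hcard : Fintype.card {y : α // y ≠ x} = m + 1 := by
        have := Fintype.card_subtype_compl (fun y => y = x)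
        simp only [Fintype.card_subtype_eq] at this
        rw [hα] at this
        simpa using this
      have : Nonempty {y : α // y ≠ x} := Fintype.card_pos_iff.1 (by omega)
      refine tri_step x (by omega) (ih _ hcard a b c (by omega) (by omega) hc ?_ (by omega))
      rw [Nat.even_iff] at he ⊢
      omega
    intro a b c ha hb hc he hs
    by_cases h1 : c ≤ m
    · exact main a b c ha hb h1 he hs
    by_cases h2 : b ≤ m
    · exact (main c a b hc ha h2 (by rw [Nat.even_iff] at he ⊢; omega) (by omega)).rotate
    by_cases h3 : a ≤ m
    · exact (main b c a hb hc h3 (by rw [Nat.even_iff] at he ⊢; omega) (by omega)).rotate.rotate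
    obtain rfl : a = m + 1 := by omega
    obtain rfl : b = m + 1 := by omega
    obtain rfl : c = m + 1 := by omega
    exact tri_base hα (by rw [Nat.even_iff] at he ⊢; omega)

lemma tri_any : ∀ m : ℕ, ∀ (α : Type) [Fintype α] [DecidableEq α], Fintype.card α = m + 1 →
    ∀ a b c : ℕ, a ≤ m → b ≤ m → c ≤ m → Even (a + b + c) → a ≤ b + c → b ≤ a + c → c ≤ a + b →
    ∃ σ τ ρ : Perm α, σ.cycleType = CT a ∧ τ.cycleType = CT b ∧ ρ.cycleType = CT c ∧
      σ * τ * ρ = 1 := by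
  intro m
  induction m with
  | zero =>
    intro α _ _ hα a b c ha hb hc he _ _ _
    obtain ⟨σ, τ, ρ, h1, h2, h3, h4, -⟩ := tri_core 0 α hα a b c ha hb hc he (by omega)
    exact ⟨σ, τ, ρ, h1, h2, h3, h4⟩
  | succ m ih =>
    intro α _ _ hα a b c ha hb hc he t1 t2 t3
    by_cases hs : 2 * (m + 1) ≤ a + b + c
    · obtain ⟨σ, τ, ρ, h1, h2, h3, h4, -⟩ := tri_core (m + 1) α hα a b c ha hb hc he hs
      exact ⟨σ, τ, ρ, h1, h2, h3, h4⟩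
    · obtain ⟨x⟩ : Nonempty α := Fintype.card_pos_iff.1 (by omega)
      have hcard : Fintype.card {y : α // y ≠ x} = m + 1 := by
        have := Fintype.card_subtype_compl (fun y => y = x)
        simp only [Fintype.card_subtype_eq] at this
        rw [hα] at this
        simpa using this
      obtain ⟨σ, τ, ρ, h1, h2, h3, h4⟩ := ih _ hcard a b c (by omega) (by omega) (by omega)
        he t1 t2 t3
      refine ⟨ofSubtype σ, ofSubtype τ, ofSubtype ρ, ?_, ?_, ?_, ?_⟩
      · rw [cycleType_ofSubtype, h1]
      · rw [cycleType_ofSubtype, h2]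
      · rw [cycleType_ofSubtype, h3]
      · rw [← map_mul, ← map_mul, h4, map_one]

/-- Every cycle factors as a product of two cycles of admissible lengths. -/
lemma split {m : ℕ} {α : Type} [Fintype α] [DecidableEq α] (hα : Fintype.card α = m + 1)
    {a b c : ℕ} (ha : a ≤ m) (hb : b ≤ m) (hc : c ≤ m) (he : Even (a + b + c))
    (t1 : a ≤ b + c) (t2 : b ≤ a + c) (t3 : c ≤ a + b) (π : Perm α) (hπ : π.cycleType = CT c) :
    ∃ σ τ : Perm α, σ.cycleType = CT a ∧ τ.cycleType = CT b ∧ σ * τ = π := by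
  obtain ⟨σ, τ, ρ, h1, h2, h3, h4⟩ := tri_any m α hα a b c ha hb hc he t1 t2 t3
  have hc : IsConj (σ * τ) π := by
    rw [isConj_iff_cycleType_eq, hπ, eq_inv_of_mul_eq_one_left h4, cycleType_inv, h3]
  obtain ⟨g, hg⟩ := isConj_iff.1 hc
  refine ⟨g * σ * g⁻¹, g * τ * g⁻¹, by rw [cycleType_conj, h1], by rw [cycleType_conj, h2], ?_⟩
  rw [← hg]
  group

/-- The list version of the existence statement. -/
def Sol (α : Type) [Fintype α] [DecidableEq α] (L : List ℕ) : Prop :=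
  ∃ P : List (Perm α), List.Forall₂ (fun (p : Perm α) a => p.cycleType = CT a) P L ∧ P.prod = 1 ∧
    ∀ r : α → α → Prop, Equivalence r → (∀ p ∈ P, ∀ z, r z (p z)) → ∀ x y, r x y

lemma Sol.split {m : ℕ} {α : Type} [Fintype α] [DecidableEq α] (hα : Fintype.card α = m + 1)
    {a b c : ℕ} (ha : a ≤ m) (hb : b ≤ m) (hc : c ≤ m) (he : Even (a + b + c))
    (t1 : a ≤ b + c) (t2 : b ≤ a + c) (t3 : c ≤ a + b) {L : List ℕ} (h : Sol α (c :: L)) :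
    Sol α (a :: b :: L) := by
  obtain ⟨P, h1, h2, h3⟩ := h
  cases h1 with
  | @cons π _ P _ hπ hP =>
    obtain ⟨σ, τ, k1, k2, k3⟩ := HurwitzAux.split hα ha hb hc he t1 t2 t3 π hπ
    refine ⟨σ :: τ :: P, .cons k1 (.cons k2 hP), ?_, fun r hr hh => h3 r hr ?_⟩
    · rw [List.prod_cons, List.prod_cons, ← mul_assoc, k3, ← List.prod_cons, h2]
    · intro p hp z
      rcases List.mem_cons.1 hp with rfl | hp
      · rw [← k3, Perm.mul_apply]
        exact hr.trans (hh τ (by simp) z) (hh σ (by simp) _)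
      · exact hh p (by simp [hp]) z

lemma Sol.rot {α : Type} [Fintype α] [DecidableEq α] {a : ℕ} {L : List ℕ}
    (h : Sol α (L ++ [a])) : Sol α (a :: L) := by
  obtain ⟨P, h1, h2, h3⟩ := h
  obtain ⟨Q, R, hQ, hR, rfl⟩ : ∃ Q R, List.Forall₂ (fun (p : Perm α) a => p.cycleType = CT a) Q L ∧
      List.Forall₂ (fun (p : Perm α) a => p.cycleType = CT a) R [a] ∧ P = Q ++ R :=
    ⟨P.take L.length, P.drop L.length, List.forall₂_take_append _ _ _ h1,
      List.forall₂_drop_append _ _ _ h1, by simp⟩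
  cases hR with
  | @cons p _ R _ hp hR =>
    cases hR
    refine ⟨p :: Q, .cons hp hQ, ?_, fun r hr hh => h3 r hr fun q hq => hh q ?_⟩
    · rw [List.prod_append, List.prod_singleton] at h2
      rw [List.prod_cons]
      exact mul_eq_one_iff_eq_inv.2 (eq_inv_of_mul_eq_one_right h2)
    · simp only [List.mem_append, List.mem_cons, List.not_mem_nil, or_false] at hq ⊢
      tauto

lemma sol_short {m : ℕ} {α : Type} [Fintype α] [DecidableEq α] (hα : Fintype.card α = m + 1)
    {L : List ℕ} (hL : L.length ≤ 3) (hm : ∀ a ∈ L, a ≤ m) (he : Even L.sum)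
    (hs : 2 * m ≤ L.sum) : Sol α L := by
  match L, hL with
  | [], _ =>
    simp only [List.sum_nil] at hs he
    obtain ⟨σ, τ, ρ, h1, h2, h3, h4, h5⟩ :=
      tri_core m α hα 0 0 0 (by simp) (by simp) (by simp) (by simp) (by omega)
    have := eq_one_of_CT h1
    have := eq_one_of_CT h2
    have := eq_one_of_CT h3
    subst σ τ ρ
    exact ⟨[], .nil, rfl, fun r hr _ => h5 r hr hr.refl hr.refl hr.refl⟩
  | [a], _ =>
    simp only [List.sum_cons, List.sum_nil, add_zero] at hs he
    obtain ⟨σ, τ, ρ, h1, h2, h3, h4, h5⟩ :=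
      tri_core m α hα a 0 0 (hm a (by simp)) (by simp) (by simp) (by simpa using he) (by omega)
    have := eq_one_of_CT h2
    have := eq_one_of_CT h3
    subst τ ρ
    exact ⟨[σ], .cons h1 .nil, by simpa using h4, fun r hr hh => h5 r hr (hh σ (by simp))
      hr.refl hr.refl⟩
  | [a, b], _ =>
    simp only [List.sum_cons, List.sum_nil, add_zero] at hs he
    obtain ⟨σ, τ, ρ, h1, h2, h3, h4, h5⟩ :=
      tri_core m α hα a b 0 (hm a (by simp)) (hm b (by simp)) (by simp) (by simpa using he)
        (by omega)
    have := eq_one_of_CT h3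
    subst ρ
    exact ⟨[σ, τ], .cons h1 (.cons h2 .nil), by simpa using h4,
      fun r hr hh => h5 r hr (hh σ (by simp)) (hh τ (by simp)) hr.refl⟩
  | [a, b, c], _ =>
    simp only [List.sum_cons, List.sum_nil, add_zero, ← add_assoc] at hs he
    obtain ⟨σ, τ, ρ, h1, h2, h3, h4, h5⟩ :=
      tri_core m α hα a b c (hm a (by simp)) (hm b (by simp)) (hm c (by simp)) he (by omega)
    exact ⟨[σ, τ, ρ], .cons h1 (.cons h2 (.cons h3 .nil)), by simpa [mul_assoc] using h4,
      fun r hr hh => h5 r hr (hh σ (by simp)) (hh τ (by simp)) (hh ρ (by simp))⟩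

lemma sol_main {m : ℕ} {α : Type} [Fintype α] [DecidableEq α] (hα : Fintype.card α = m + 1) :
    ∀ (n : ℕ) (L : List ℕ), L.length = n → (∀ a ∈ L, a ≤ m) → Even L.sum → 2 * m ≤ L.sum →
      Sol α L := by
  intro n
  induction n with
  | zero => exact fun L hL hm he hs => sol_short hα (by omega) hm he hs
  | succ n ih =>
    intro L hL hm he hs
    match L with
    | [] => exact sol_short hα (by simp) hm he hs
    | [_] => exact sol_short hα (by simp) hm he hs
    | [_, _] => exact sol_short hα (by simp) hm he hs
    | [_, _, _] => exact sol_short hα (by simp) hm he hs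
    | a :: b :: c :: d :: L =>
      simp only [List.length_cons, List.sum_cons, List.mem_cons, forall_eq_or_imp] at hL hm he hs
      obtain ⟨ha, hb, hc, hd, hm⟩ := hm
      by_cases h1 : a + b ≤ m
      · refine Sol.split hα ha hb (c := a + b) h1 ⟨a + b, rfl⟩ (by omega) (by omega) le_rfl
          (ih _ ?_ ?_ ?_ ?_)
        · simp only [List.length_cons]; omega
        · simp only [List.mem_cons, forall_eq_or_imp]; exact ⟨h1, hc, hd, hm⟩
        · simp only [List.sum_cons]; rwa [add_assoc]
        · simp only [List.sum_cons]; omega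
      by_cases h2 : c + d ≤ m
      · have key : Sol α ((c + d) :: (L ++ [a] ++ [b])) := by
          refine ih _ ?_ ?_ ?_ ?_
          · simp only [List.length_cons, List.length_append, List.length_nil]; omega
          · simp only [List.mem_cons, List.mem_append, List.not_mem_nil, or_false]
            rintro x (rfl | (hx | rfl) | rfl)
            exacts [h2, hm x hx, ha, hb]
          · simp only [List.sum_cons, List.sum_append, List.sum_nil]
            rw [Nat.even_iff] at he ⊢
            omega
          · simp only [List.sum_cons, List.sum_append, List.sum_nil]
            omega
        have := Sol.split hα hc hd h2 ⟨c + d, rfl⟩ (by omega) (by omega) le_rfl key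
        exact Sol.rot (L := b :: c :: d :: L)
          (Sol.rot (L := c :: d :: L ++ [a]) (by simpa using this))
      obtain ⟨k, hk, hkm, hke⟩ : ∃ k, k ≤ m ∧ m ≤ k + 1 ∧ Even (a + b + k) := by
        by_cases hp : Even (a + b + m)
        · exact ⟨m, le_rfl, by omega, hp⟩
        · refine ⟨m - 1, by omega, by omega, ?_⟩
          rw [Nat.even_iff] at hp ⊢
          omega
      refine Sol.split hα ha hb (c := k) hk hke (by omega) (by omega) (by omega)
          (ih _ ?_ ?_ ?_ ?_)
      · simp only [List.length_cons]; omega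
      · simp only [List.mem_cons, forall_eq_or_imp]; exact ⟨hk, hc, hd, hm⟩
      · simp only [List.sum_cons]
        rw [Nat.even_iff] at he hke ⊢
        omega
      · simp only [List.sum_cons]; omega

end HurwitzAux


/-- **Theorem 1 (main existence theorem).** Let `d ≥ 2`, `n ≥ 1`, `g ≥ 0` be integers and
`e : Fin n → ℕ` with `2 ≤ e i ≤ d` for all `i` and `∑ i, e i = 2(g - 1 + d) + n`
(the Riemann–Hurwitz condition). Then there exist permutations `σ 0, …, σ (n-1)` of `Fin d`
such that each `σ i` is a cycle of length `e i`, the product `σ (n-1) * ⋯ * σ 0` is the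
identity, and the subgroup generated by the `σ i` acts transitively on `Fin d`. -/
theorem hurwitz_existence (d n g : ℕ) (hd : 2 ≤ d) (hn : 1 ≤ n)
    (e : Fin n → ℕ) (he : ∀ i, 2 ≤ e i ∧ e i ≤ d)
    (hRH : (∑ i, (e i : ℤ)) = 2 * ((g : ℤ) - 1 + d) + n) :
    ∃ σ : Fin n → Equiv.Perm (Fin d),
      (∀ i, (σ i).IsCycle ∧ (σ i).support.card = e i) ∧
      ((List.ofFn σ).reverse).prod = 1 ∧
      (∀ a b : Fin d, ∃ τ ∈ Subgroup.closure (Set.range σ), τ a = b) := by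
  obtain ⟨m, rfl⟩ : ∃ m, d = m + 1 := ⟨d - 1, by omega⟩
  have hsum : ((List.ofFn fun i => e i - 1).sum : ℤ) = 2 * m + 2 * g := by
    rw [List.sum_ofFn]
    have h1 : ∀ i, ((e i - 1 : ℕ) : ℤ) = (e i : ℤ) - 1 := fun i => by
      have := (he i).1
      omega
    push_cast [Nat.cast_sum, h1]
    rw [Finset.sum_sub_distrib, hRH]
    simp
    ring
  have hsum' : (List.ofFn fun i => e i - 1).sum = 2 * m + 2 * g := by exact_mod_cast hsum
  obtain ⟨P, h1, h2, h3⟩ := HurwitzAux.sol_main (α := Fin (m + 1)) (m := m) (by simp) n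
    (List.ofFn fun i => e i - 1).reverse (by simp)
    (by
      intro a ha
      simp only [List.mem_reverse, List.mem_ofFn] at ha
      obtain ⟨i, rfl⟩ := ha
      have := (he i).2
      omega)
    (by rw [List.sum_reverse, hsum', ← mul_add]; exact even_two_mul _)
    (by rw [List.sum_reverse, hsum']; omega)
  have h1' := List.forall₂_reverse_iff.2 h1
  rw [List.reverse_reverse] at h1'
  have hlen : P.reverse.length = n := by simpa using h1'.length_eq
  obtain ⟨σ, hσ⟩ : ∃ σ : Fin n → Equiv.Perm (Fin (m + 1)), List.ofFn σ = P.reverse := by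
    subst hlen
    exact ⟨P.reverse.get, List.ofFn_get _⟩
  rw [← hσ] at h1'
  refine ⟨σ, fun i => ?_, by rw [hσ, List.reverse_reverse, h2], fun a b => ?_⟩
  · have := (List.forall₂_iff_get.1 h1').2 i (by simp) (by simp)
    simp only [List.get_eq_getElem, List.getElem_ofFn, Fin.eta] at this
    have hi := (he i).1
    have := HurwitzAux.isCycle_of_CT (by omega) this
    exact ⟨this.1, by rw [this.2]; omega⟩
  · refine h3 (fun a b => ∃ τ ∈ Subgroup.closure (Set.range σ), τ a = b) ⟨?_, ?_, ?_⟩ ?_ a b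
    · exact fun x => ⟨1, one_mem _, rfl⟩
    · rintro x y ⟨τ, hτ, rfl⟩
      exact ⟨τ⁻¹, inv_mem hτ, by simp⟩
    · rintro x y z ⟨τ, hτ, rfl⟩ ⟨ρ, hρ, rfl⟩
      exact ⟨ρ * τ, mul_mem hρ hτ, rfl⟩
    · intro p hp z
      refine ⟨p, Subgroup.subset_closure ?_, rfl⟩
      rw [← List.mem_reverse, ← hσ, List.mem_ofFn] at hp
      exact hp
end

section
/- Let d ≥ 2 and n ≥ 2 be integers and let e : Fin n → ℕ be a (d,n)-admissible tuple, i.e. 2 ≤ e i ≤ d for all i, (∑ i, e i) - n is even, and (∑ i, e i) - n ≥ 2(d - 1). Then there exist permutations σ_1, …, σ_n of Fin d such that: each σ_i is a cycle of length e i; σ_n * ⋯ * σ_1 = 1; the subgroup generated by {σ_1, …, σ_n} acts transitively on Fin d; and for every i ∈ {1, …, n-1} the cycles σ_i and σ_{i+1} are not disjoint (their supports have nonempty intersection). -/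
open Equiv Equiv.Perm

namespace AdmTuple

variable {α : Type*} [Fintype α] [DecidableEq α]

/-- a cycle moving exactly `k + 1` points -/
def Cyc (k : ℕ) (p : Perm α) : Prop := p.IsCycle ∧ p.support.card = k + 1

/-- a realizable triple on the point set `S` -/
def Tri (S : Finset α) (a b c : ℕ) : Prop :=
  ∃ p q r : Perm α, Cyc a p ∧ Cyc b q ∧ Cyc c r ∧ r * q * p = 1 ∧
    p.support ∪ q.support ∪ r.support = S ∧ (p.support ∩ q.support).Nonempty ∧
    (q.support ∩ r.support).Nonempty ∧ (r.support ∩ p.support).Nonempty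

lemma Cyc.inv {k : ℕ} {p : Perm α} (h : Cyc k p) : Cyc k p⁻¹ :=
  ⟨h.1.inv, by rw [support_inv]; exact h.2⟩

lemma Cyc.conj {k : ℕ} {p : Perm α} (h : Cyc k p) (g : Perm α) : Cyc k (g * p * g⁻¹) :=
  ⟨h.1.conj, by rw [card_support_conj]; exact h.2⟩

lemma exists_cyc (S : Finset α) (k : ℕ) (hk : 1 ≤ k) (hS : S.card = k + 1) :
    ∃ p : Perm α, Cyc k p ∧ p.support = S := by
  have hl : S.toList.length = k + 1 := by simp [hS]
  have h1 : S.toList.formPerm.support = S := by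
    rw [List.support_formPerm_of_nodup _ S.nodup_toList]
    · simp
    · intro x hx
      rw [hx] at hl
      simp at hl
      omega
  exact ⟨S.toList.formPerm, ⟨List.isCycle_formPerm S.nodup_toList (by omega), by rw [h1, hS]⟩, h1⟩

lemma insert_left {k : ℕ} {p : Perm α} (h : Cyc k p) {x z : α} (hx : x ∈ p.support)
    (hz : z ∉ p.support) :
    Cyc (k + 1) (swap x z * p) ∧ (swap x z * p).support = insert z p.support := by
  have hc : p.cycleOf x = p := h.1.cycleOf_eq (by simpa using hx)
  have h1 : (p.toList x).formPerm = p := by rw [formPerm_toList, hc]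
  have hlen : (p.toList x).length = k + 1 := by rw [length_toList, hc, h.2]
  have hnd := nodup_toList p x
  have hzl : z ∉ p.toList x := by
    intro hm
    rw [mem_toList_iff] at hm
    exact hz (hm.1.mem_support_iff.1 hm.2)
  have hk : 1 ≤ k := by
    have := h.1.two_le_card_support
    have := h.2
    omega
  have hhead : ∃ l, p.toList x = x :: l := by
    cases hl : p.toList x with
    | nil => rw [hl] at hlen; simp at hlen
    | cons y l =>
      have : (p.toList x)[0]'(by omega) = x := by simp [toList]
      simp [hl] at this
      exact ⟨l, by rw [this]⟩
  obtain ⟨l, hl⟩ := hhead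
  have hform : swap x z * p = (z :: x :: l).formPerm := by
    rw [List.formPerm_cons_cons, ← hl, h1, swap_comm]
  have hnd' : (z :: x :: l).Nodup := by
    rw [← hl]
    exact List.nodup_cons.2 ⟨hzl, hnd⟩
  have hsup : (swap x z * p).support = insert z p.support := by
    rw [hform, List.support_formPerm_of_nodup _ hnd' (by intro y hy; simp at hy)]
    rw [List.toFinset_cons, ← hl, ← List.support_formPerm_of_nodup _ hnd, h1]
    intro y hy
    rw [hy] at hlen
    simp at hlen
    omega
  refine ⟨⟨?_, ?_⟩, hsup⟩
  · rw [hform]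
    exact List.isCycle_formPerm hnd' (by simp)
  · rw [hsup, Finset.card_insert_of_notMem hz, h.2]

lemma insert_right {k : ℕ} {p : Perm α} (h : Cyc k p) {x z : α} (hx : x ∈ p.support)
    (hz : z ∉ p.support) :
    Cyc (k + 1) (p * swap x z) ∧ (p * swap x z).support = insert z p.support := by
  have := insert_left h.inv (x := x) (z := z) (by rwa [support_inv]) (by rwa [support_inv])
  have he : p * swap x z = (swap x z * p⁻¹)⁻¹ := by simp [mul_inv_rev]
  rw [he, support_inv, this.2, support_inv]
  exact ⟨this.1.inv, rfl⟩

lemma Tri.rot {S : Finset α} {a b c : ℕ} (h : Tri S a b c) : Tri S b c a := by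
  obtain ⟨p, q, r, hp, hq, hr, h1, hS, h2, h3, h4⟩ := h
  refine ⟨q, r, p, hq, hr, hp, ?_, ?_, h3, h4, h2⟩
  · have : r * q = p⁻¹ := eq_inv_of_mul_eq_one_left h1
    rw [mul_assoc, this, mul_inv_cancel]
  · rw [← hS, Finset.union_comm (q.support ∪ r.support), Finset.union_assoc]

lemma Tri.grow {S : Finset α} {a b c : ℕ} {z : α} (hz : z ∈ S) (h : Tri (S.erase z) a b c) :
    Tri S (a + 1) (b + 1) c := by
  obtain ⟨p, q, r, hp, hq, hr, h1, hS, ⟨x, hx⟩, h3, h4⟩ := h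
  have hzn : z ∉ p.support ∪ q.support ∪ r.support := by rw [hS]; simp
  simp only [Finset.mem_union, not_or] at hzn
  rw [Finset.mem_inter] at hx
  obtain ⟨A, A'⟩ := insert_left hp hx.1 hzn.1.1
  obtain ⟨B, B'⟩ := insert_right hq hx.2 hzn.1.2
  refine ⟨_, _, r, A, B, hr, ?_, ?_, ?_, ?_, ?_⟩
  · rw [← h1]
    simp only [mul_assoc, swap_mul_self_mul]
  · rw [A', B', ← Finset.insert_erase hz, ← hS]
    ext; simp
  · rw [A', B']
    exact ⟨z, by simp⟩
  · rw [B']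
    exact h3.mono (Finset.inter_subset_inter_right (Finset.subset_insert _ _))
  · rw [A']
    exact h4.mono (Finset.inter_subset_inter_left (Finset.subset_insert _ _))

lemma tri_three {S : Finset α} (hS : S.card = 3) : Tri S 1 1 2 := by
  obtain ⟨x, y, z, hxy, hxz, hyz, rfl⟩ := Finset.card_eq_three.1 hS
  have hsw : ∀ u v : α, u ≠ v → Cyc 1 (swap u v) := fun u v h =>
    ⟨isCycle_swap h, by rw [card_support_swap h]⟩
  obtain ⟨A, A'⟩ := insert_left (hsw x y hxy) (x := x) (z := z)
    (by rw [support_swap hxy]; simp) (by rw [support_swap hxy]; simp [hxz.symm, hyz.symm])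
  refine ⟨swap x y, swap x z, (swap x z * swap x y)⁻¹, hsw _ _ hxy, hsw _ _ hxz, A.inv, ?_, ?_,
    ?_, ?_, ?_⟩
  · group
  · rw [support_inv, A', support_swap hxy, support_swap hxz]
    ext; simp; tauto
  · exact ⟨x, by simp [support_swap hxy, support_swap hxz]⟩
  · rw [support_inv, A']
    exact ⟨x, by simp [support_swap hxy, support_swap hxz]⟩
  · rw [support_inv, A']
    exact ⟨x, by simp [support_swap hxy]⟩

lemma tri_full {S : Finset α} {k : ℕ} (hk : 1 ≤ k) (he : Even k) (hS : S.card = k + 1) :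
    Tri S k k k := by
  obtain ⟨p, hp, hpS⟩ := exists_cyc S k hk hS
  have hco : Nat.Coprime 2 (orderOf p) := by
    rw [hp.1.orderOf, hp.2, Nat.coprime_two_left]
    exact he.add_one
  have h2 : (p ^ 2).support = S := by rw [support_pow_coprime hco, hpS]
  have hne : S.Nonempty := by rw [← Finset.card_pos]; omega
  have hc2 : Cyc k (p ^ 2) := ⟨hp.1.pow_iff.2 hco, by rw [h2, hS]⟩
  refine ⟨p, p, (p ^ 2)⁻¹, hp, hp, hc2.inv, by group, ?_, ?_, ?_, ?_⟩ <;>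
    simp only [support_inv, h2, hpS, Finset.inter_self, Finset.union_self, hne]

lemma tri_exists : ∀ (D : ℕ) (S : Finset α) (a b c : ℕ), S.card = D + 1 → 1 ≤ a → 1 ≤ b → 1 ≤ c →
    a ≤ D → b ≤ D → c ≤ D → Even (a + b + c) → 2 * D ≤ a + b + c → Tri S a b c := by
  intro D
  induction D with
  | zero => intros; omega
  | succ D ih =>
    have key : ∀ (S : Finset α) (a b c : ℕ), S.card = D + 1 + 1 → 1 ≤ a → 1 ≤ b → 1 ≤ c →
      a ≤ D + 1 → b ≤ D + 1 → c ≤ D + 1 → Even (a + b + c) → 2 * (D + 1) ≤ a + b + c →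
      c ≤ a → c ≤ b → Tri S a b c := by
      intro S a b c hS ha hb hc haD hbD hcD hev hge hca hcb
      obtain ⟨m, hm⟩ := hev
      by_cases hfull : c = D + 1
      · obtain rfl : a = D + 1 := by omega
        obtain rfl : b = D + 1 := by omega
        subst hfull
        exact tri_full (by omega) ⟨m - (D + 1), by omega⟩ hS
      · by_cases ha2 : a = 1
        · obtain rfl : c = 1 := by omega
          obtain rfl : D = 1 := by omega
          obtain rfl : b = 2 := by omega
          subst ha2
          exact (tri_three hS).rot
        · by_cases hb2 : b = 1
          · obtain rfl : c = 1 := by omega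
            obtain rfl : D = 1 := by omega
            obtain rfl : a = 2 := by omega
            subst hb2
            exact (tri_three hS).rot.rot
          · obtain ⟨z, hz⟩ : S.Nonempty := by rw [← Finset.card_pos]; omega
            obtain ⟨a', rfl⟩ : ∃ a', a = a' + 1 := ⟨a - 1, by omega⟩
            obtain ⟨b', rfl⟩ : ∃ b', b = b' + 1 := ⟨b - 1, by omega⟩
            refine Tri.grow hz (ih _ _ _ _ ?_ ?_ ?_ ?_ ?_ ?_ ?_ ⟨m - 1, ?_⟩ ?_) <;> try omega
            rw [Finset.card_erase_of_mem hz]; omega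
    intro S a b c hS ha hb hc haD hbD hcD hev hge
    by_cases h1 : c ≤ a ∧ c ≤ b
    · exact key S a b c hS ha hb hc haD hbD hcD hev hge h1.1 h1.2
    · by_cases h2 : a ≤ b ∧ a ≤ c
      · exact (key S b c a hS hb hc ha hbD hcD haD (by rwa [show b + c + a = a + b + c by ring])
          (by omega) h2.1 h2.2).rot.rot
      · exact (key S c a b hS hc ha hb hcD haD hbD (by rwa [show c + a + b = a + b + c by ring])
          (by omega) (by omega) (by omega)).rot

lemma Tri.prescribe {S : Finset α} {a b c : ℕ} (h : Tri S a b c) {t : Perm α} (ht : Cyc c t)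
    (htS : t.support ⊆ S) {x : α} (hx : x ∈ t.support) :
    ∃ p q : Perm α, Cyc a p ∧ Cyc b q ∧ q * p = t ∧ p.support ∪ q.support = S ∧
      (p.support ∩ q.support).Nonempty ∧ x ∈ q.support := by
  obtain ⟨p, q, r, hp, hq, hr, h1, hS, h2, ⟨y, hy⟩, h4⟩ := h
  rw [Finset.mem_inter] at hy
  have hrp : q * p = r⁻¹ := by
    rw [mul_assoc] at h1
    exact eq_inv_of_mul_eq_one_right h1
  have hrS : r.support ⊆ S := by rw [← hS]; exact Finset.subset_union_right
  have hr' := hr.inv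
  obtain ⟨g0, hg0⟩ := isConj_iff.1 (hr'.1.isConj ht.1 (by rw [hr'.2, ht.2]))
  have hsup0 : ∀ w, w ∈ r.support ↔ g0 w ∈ t.support := by
    intro w
    rw [← hg0, support_conj, support_inv]
    simp
  obtain ⟨k, hk⟩ := ht.1.exists_zpow_eq (x := g0 y) (y := x)
    (by simpa using (hsup0 y).1 hy.2) (by simpa using hx)
  obtain ⟨g1, hg1d⟩ : ∃ g1, g1 = t ^ k * g0 := ⟨_, rfl⟩
  have hg1 : g1 * r⁻¹ * g1⁻¹ = t := by
    have : g1 * r⁻¹ * g1⁻¹ = t ^ k * (g0 * r⁻¹ * g0⁻¹) * (t ^ k)⁻¹ := by rw [hg1d]; group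
    rw [this, hg0]; group
  have hg1y : g1 y = x := by rw [hg1d]; simpa using hk
  have hsup1 : ∀ w, w ∈ r.support ↔ g1 w ∈ t.support := by
    intro w
    rw [← hg1, support_conj, support_inv]
    simp
  obtain ⟨E, hE⟩ := Finset.exists_equiv_extend_of_card_eq (α := {w // w ∈ S}) (t := S) (by simp)
    (s := r.support.subtype (· ∈ S)) (f := fun w => g1 w)
    (by
      intro w hw
      rw [Finset.mem_image] at hw
      obtain ⟨v, hv, rfl⟩ := hw
      exact htS ((hsup1 _).1 (by simpa using hv)))
    (fun u _ v _ huv => Subtype.ext (g1.injective huv))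
  obtain ⟨g, hgd⟩ : ∃ g : Perm α, g = ofSubtype (p := (· ∈ S)) E := ⟨_, rfl⟩
  have hgr : ∀ w ∈ r.support, g w = g1 w := by
    intro w hw
    rw [hgd, ofSubtype_apply_of_mem E (hrS hw)]
    exact hE ⟨w, hrS hw⟩ (by simpa using hw)
  have hgS : S.map g.toEmbedding = S := by
    apply Finset.eq_of_subset_of_card_le
    · intro w hw
      rw [Finset.mem_map] at hw
      obtain ⟨v, hv, rfl⟩ := hw
      simp only [Equiv.coe_toEmbedding]
      rw [hgd, ofSubtype_apply_of_mem E hv]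
      exact (E ⟨v, hv⟩).2
    · simp
  have hgt : g * r⁻¹ * g⁻¹ = t := by
    have hcomm : ∀ w, t (g1 w) = g1 (r⁻¹ w) := by
      intro w
      rw [← hg1]; simp
    rw [mul_inv_eq_iff_eq_mul]
    ext w
    simp only [Perm.mul_apply]
    by_cases hw : w ∈ r.support
    · rw [hgr w hw, hcomm, hgr]
      rw [← support_inv, apply_mem_support, support_inv]
      exact hw
    · have h5 : r⁻¹ w = w := by
        rw [← support_inv] at hw
        exact notMem_support.1 hw
      rw [h5]
      by_contra hne
      have h6 : g w ∈ t.support := by rw [mem_support]; exact fun h => hne h.symm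
      have h7 : g1⁻¹ (g w) ∈ r.support := by rw [hsup1]; simpa using h6
      have h8 := hgr _ h7
      rw [← Perm.mul_apply g1, mul_inv_cancel, Perm.one_apply] at h8
      rw [g.injective h8] at h7
      exact hw h7
  refine ⟨g * p * g⁻¹, g * q * g⁻¹, hp.conj g, hq.conj g, ?_, ?_, ?_, ?_⟩
  · rw [← hgt, ← hrp]; group
  · rw [support_conj, support_conj, ← Finset.map_union]
    have : p.support ∪ q.support = S := by
      rw [← hS]
      symm
      rw [Finset.union_eq_left]
      rw [← support_inv, ← hrp, Finset.union_comm]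
      exact support_mul_le q p
    rw [this, hgS]
  · rw [support_conj, support_conj, ← Finset.map_inter]
    exact h2.map
  · rw [support_conj, Finset.mem_map]
    exact ⟨y, hy.1, by simp [hgr y hy.2, hg1y]⟩

/-- realizability of a list of (reduced) lengths on the point set `S` -/
def Real (S : Finset α) (l : List ℕ) : Prop :=
  ∃ s : List (Perm α), List.Forall₂ Cyc l s ∧ s.reverse.prod = 1 ∧ (∀ p ∈ s, p.support ⊆ S) ∧
    (∀ x ∈ S, ∃ p ∈ s, x ∈ p.support) ∧
    s.IsChain (fun p q => (p.support ∩ q.support).Nonempty)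

/-- gluing a triple on `S₁` to a realization on `S₂` -/
lemma Real.glue {S : Finset α} {a b c f : ℕ} {l : List ℕ}
    (h : Real S (c :: f :: l)) (T : Finset α)
    (hT : ∀ t : Perm α, Cyc c t → t.support ⊆ S → ∃ S' : Finset α,
      t.support ⊆ S' ∧ S ∪ S' = T ∧ Tri S' a b c) :
    Real T (a :: b :: f :: l) := by
  obtain ⟨s, h1, h2, h3, h4, h5⟩ := h
  obtain ⟨t, s, ht, h1a, rfl⟩ := List.forall₂_cons_left_iff.1 h1
  obtain ⟨u, s, hu, h1b, rfl⟩ := List.forall₂_cons_left_iff.1 h1a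
  rw [List.isChain_cons_cons] at h5
  obtain ⟨⟨x, hx⟩, h5⟩ := h5
  rw [Finset.mem_inter] at hx
  obtain ⟨S', htS', hun, htri⟩ := hT t ht (h3 t (by simp))
  obtain ⟨p, q, hp, hq, hqp, hpq, hne, hxq⟩ := htri.prescribe ht htS' hx.1
  refine ⟨p :: q :: u :: s, .cons hp (.cons hq (.cons hu h1b)), ?_, ?_, ?_, ?_⟩
  · rw [← h2]
    simp [← hqp]
  · intro w hw
    rw [← hun]
    simp only [List.mem_cons] at hw
    rcases hw with rfl | rfl | hw
    · exact (Finset.subset_union_left.trans hpq.subset).trans Finset.subset_union_right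
    · exact (Finset.subset_union_right.trans hpq.subset).trans Finset.subset_union_right
    · exact (h3 w (by simp only [List.mem_cons]; tauto)).trans Finset.subset_union_left
  · have hS' : ∀ y ∈ S', ∃ v ∈ p :: q :: u :: s, y ∈ v.support := by
      intro y hy
      rw [← hpq, Finset.mem_union] at hy
      rcases hy with hy | hy
      · exact ⟨p, by simp, hy⟩
      · exact ⟨q, by simp, hy⟩
    intro y hy
    rw [← hun, Finset.mem_union] at hy
    rcases hy with hy | hy
    · obtain ⟨v, hv, hyv⟩ := h4 y hy
      rw [List.mem_cons] at hv
      rcases hv with rfl | hv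
      · exact hS' y (htS' hyv)
      · exact ⟨v, by simp only [List.mem_cons] at hv ⊢; tauto, hyv⟩
    · exact hS' y hy
  · rw [List.isChain_cons_cons, List.isChain_cons_cons]
    exact ⟨hne, ⟨x, by simp [hxq, hx.2]⟩, h5⟩

lemma real_two {S : Finset α} (hS : S.card = 2) : ∀ (l : List ℕ), l ≠ [] → (∀ f ∈ l, f = 1) →
    Even l.length → Real S l := by
  intro l hl hf hev
  obtain ⟨p, hp, hpS⟩ := exists_cyc S 1 le_rfl hS
  have hl' := List.eq_replicate_of_mem hf
  have hpp : p ^ 2 = 1 := by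
    have := pow_orderOf_eq_one p
    rwa [hp.1.orderOf, hp.2] at this
  obtain ⟨m, hm⟩ := hev
  refine ⟨List.replicate l.length p, ?_, ?_, ?_, ?_, ?_⟩
  · rw [List.forall₂_iff_get]
    refine ⟨by simp, fun i h1 h2 => ?_⟩
    have : l.get ⟨i, h1⟩ = 1 := hf _ (List.get_mem _ _)
    rw [this]
    simpa using hp
  · rw [List.reverse_replicate, List.prod_replicate, hm, ← two_mul, pow_mul, hpp, one_pow]
  · intro q hq
    rw [List.eq_of_mem_replicate hq, hpS]
  · intro x hx
    refine ⟨p, ?_, by rwa [hpS]⟩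
    rw [List.mem_replicate]
    exact ⟨by simpa using hl, rfl⟩
  · rw [List.isChain_iff_getElem]
    intro i hi
    simp only [List.getElem_replicate, Finset.inter_self, hpS]
    rw [← Finset.card_pos]; omega

lemma real_exists : ∀ (l : List ℕ) (a b D : ℕ) (S : Finset α), S.card = D + 1 → 1 ≤ D →
    (∀ f ∈ a :: b :: l, 1 ≤ f ∧ f ≤ D) → Even (a + b + l.sum) → 2 * D ≤ a + b + l.sum →
    Real S (a :: b :: l) := by
  intro l
  induction l with
  | nil =>
    intro a b D S hS hD hf hev hge
    simp only [List.mem_cons, List.not_mem_nil, or_false, forall_eq_or_imp, forall_eq] at hf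
    simp only [List.sum_nil, add_zero] at hge
    obtain rfl : a = D := by omega
    obtain rfl : b = a := by omega
    obtain ⟨p, hp, hpS⟩ := exists_cyc S b hD hS
    refine ⟨[p, p⁻¹], .cons hp (.cons hp.inv .nil), by simp, ?_, ?_, ?_⟩
    · simp [hpS]
    · intro x hx
      exact ⟨p, by simp, by rwa [hpS]⟩
    · simp only [List.isChain_cons_cons, support_inv, Finset.inter_self, hpS,
        List.isChain_singleton, and_true]
      rw [← Finset.card_pos]; omega
  | cons f l ih =>
    intro a b D S hS hD hf hev hge
    have hfl : ∀ g ∈ f :: l, 1 ≤ g ∧ g ≤ D := fun g hg => hf g (by simp only [List.mem_cons] at hg ⊢; tauto)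
    have ha := hf a (by simp)
    have hb := hf b (by simp)
    have hfD := hf f (by simp)
    obtain ⟨R, hR⟩ : ∃ R, R = (f :: l).sum := ⟨_, rfl⟩
    have hR' : R = f + l.sum := by simp [hR]
    rw [← hR] at hev hge
    have hgR : ∀ g ∈ f :: l, g ≤ R := fun g hg => hR ▸ List.le_sum_of_mem hg
    obtain ⟨m, hm⟩ := hev
    have hcons : ∀ c D', 1 ≤ c → c ≤ D' → (∀ g ∈ f :: l, g ≤ D') →
        ∀ g ∈ c :: f :: l, 1 ≤ g ∧ g ≤ D' := by
      intro c D' h1 h2 h3 g hg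
      rw [List.mem_cons] at hg
      rcases hg with rfl | hg
      · exact ⟨h1, h2⟩
      · exact ⟨(hfl g hg).1, h3 g hg⟩
    by_cases c1 : a + b ≤ D
    · -- merge into a cycle of maximal length
      refine (ih (a + b) f D S hS hD (hcons _ _ (by omega) c1 fun g hg => (hfl g hg).2)
        ⟨m, by omega⟩ (by omega)).glue S fun t ht htS => ⟨t.support, subset_rfl,
          Finset.union_eq_left.2 htS, ?_⟩
      exact tri_exists (a + b) _ _ _ _ ht.2 (by omega) (by omega) (by omega) (by omega) (by omega)
        (by omega) ⟨a + b, by omega⟩ (by omega)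
    · by_cases c2 : R ≤ D
      · obtain ⟨S', hS'S, hS'⟩ := Finset.exists_subset_card_eq (s := S) (n := R + 1) (by omega)
        refine (ih R f R S' hS' (by omega) (hcons _ _ (by omega) le_rfl hgR)
          ⟨R, by omega⟩ (by omega)).glue S fun t ht htS => ⟨S, htS.trans hS'S,
            Finset.union_eq_right.2 hS'S, ?_⟩
        exact tri_exists D _ _ _ _ hS (by omega) (by omega) (by omega) (by omega) (by omega)
          (by omega) ⟨m, by omega⟩ (by omega)
      · by_cases c3 : D = 1
        · subst c3
          have hone : ∀ g ∈ a :: b :: f :: l, g = 1 := fun g hg => by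
            have := hf g hg
            omega
          refine real_two hS _ (by simp) hone ⟨m, ?_⟩
          have hsum := List.sum_eq_card_nsmul _ _ hone
          simp only [List.sum_cons, smul_eq_mul, mul_one] at hsum
          omega
        · obtain ⟨c, hc1, hcD, hcD', ⟨k, hk⟩⟩ : ∃ c, 1 ≤ c ∧ c ≤ D ∧ D ≤ c + 1 ∧ Even (a + b + c) := by
            rcases Nat.even_or_odd (a + b + D) with h | h
            · exact ⟨D, by omega, le_rfl, by omega, h⟩
            · refine ⟨D - 1, by omega, by omega, by omega, ?_⟩
              obtain ⟨k, hk⟩ := h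
              exact ⟨k, by omega⟩
          refine (ih c f D S hS hD (hcons _ _ hc1 hcD fun g hg => (hfl g hg).2)
            ⟨m + c - k, by omega⟩ (by omega)).glue S fun t ht htS => ⟨S, htS,
              Finset.union_self _, ?_⟩
          exact tri_exists D _ _ _ _ hS (by omega) (by omega) (by omega) (by omega) (by omega)
            (by omega) ⟨k, by omega⟩ (by omega)

end AdmTuple


/-- **Lemma (second basic lemma).** For any `(d,n)`-admissible tuple `e` (i.e. `2 ≤ e i ≤ d`
for all `i`, `∑ i, e i - n` is even and `∑ i, e i - n ≥ 2(d-1)`) there exist permutations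
`σ 0, …, σ (n-1)` of `Fin d` such that each `σ i` is a cycle of length `e i`, the product
`σ (n-1) * ⋯ * σ 0` is the identity, the subgroup generated by the `σ i` acts transitively
on `Fin d`, and consecutive cycles `σ i`, `σ (i+1)` are not disjoint. -/
theorem admissible_tuple_realizable (d n : ℕ) (hd : 2 ≤ d) (hn : 2 ≤ n)
    (e : Fin n → ℕ) (he : ∀ i, 2 ≤ e i ∧ e i ≤ d)
    (heven : Even ((∑ i, e i) - n)) (hge : 2 * (d - 1) ≤ (∑ i, e i) - n) :
    ∃ σ : Fin n → Equiv.Perm (Fin d),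
      (∀ i, (σ i).IsCycle ∧ (σ i).support.card = e i) ∧
      ((List.ofFn σ).reverse).prod = 1 ∧
      (∀ a b : Fin d, ∃ τ ∈ Subgroup.closure (Set.range σ), τ a = b) ∧
      (∀ i : ℕ, ∀ h : i + 1 < n,
        ((σ ⟨i, Nat.lt_of_succ_lt h⟩).support ∩ (σ ⟨i + 1, h⟩).support).Nonempty) := by
  obtain ⟨D, rfl⟩ : ∃ D, d = D + 1 := ⟨d - 1, by omega⟩
  obtain ⟨m, rfl⟩ : ∃ m, n = m + 2 := ⟨n - 2, by omega⟩
  have hsum : (∑ i, e i) - (m + 2) = ∑ i, (e i - 1) := by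
    have h1 : ∑ i, e i = ∑ i, ((e i - 1) + 1) :=
      Finset.sum_congr rfl fun i _ => by have := he i; omega
    rw [h1, Finset.sum_add_distrib]
    simp
  rw [hsum] at heven hge
  have hl : List.ofFn (fun i => e i - 1) = (e 0 - 1) :: (e 1 - 1) ::
      List.ofFn (fun i : Fin m => e i.succ.succ - 1) := by
    rw [List.ofFn_succ, List.ofFn_succ]
    rfl
  have hs2 : ∑ i, (e i - 1) = (e 0 - 1) + (e 1 - 1) +
      (List.ofFn (fun i : Fin m => e i.succ.succ - 1)).sum := by
    rw [← List.sum_ofFn, hl, List.sum_cons, List.sum_cons, add_assoc]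
  obtain ⟨s, h1, h2, h3, h4, h5⟩ : AdmTuple.Real (Finset.univ : Finset (Fin (D + 1)))
      (List.ofFn (fun i => e i - 1)) := by
    rw [hl]
    refine AdmTuple.real_exists _ _ _ D _ (by simp) (by omega) ?_ (by rwa [← hs2])
      (by rw [← hs2]; omega)
    rw [← hl]
    intro f hf
    rw [List.mem_ofFn] at hf
    obtain ⟨i, rfl⟩ := hf
    have := he i
    omega
  have hlen : s.length = m + 2 := by rw [← h1.length_eq]; simp
  obtain ⟨σ, rfl⟩ : ∃ σ : Fin (m + 2) → Equiv.Perm (Fin (D + 1)), s = List.ofFn σ := by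
    refine ⟨fun i => s.get (i.cast hlen.symm), ?_⟩
    apply List.ext_get
    · simp [hlen]
    · intro i h6 h7
      simp [-List.ofFn_succ]
  have hcyc : ∀ i, (σ i).IsCycle ∧ (σ i).support.card = e i := by
    intro i
    rw [List.forall₂_iff_get] at h1
    have h6 := h1.2 i (by simp [-List.ofFn_succ]) (by simp [-List.ofFn_succ])
    simp only [List.get_ofFn] at h6
    have h7 := he i
    have h8 := h6.2
    refine ⟨h6.1, ?_⟩
    simp [-List.ofFn_succ] at h8
    omega
  have hch : ∀ i : ℕ, ∀ h : i + 1 < m + 2,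
      ((σ ⟨i, Nat.lt_of_succ_lt h⟩).support ∩ (σ ⟨i + 1, h⟩).support).Nonempty := by
    intro i h
    rw [List.isChain_iff_getElem] at h5
    have h6 := h5 i (by simpa [-List.ofFn_succ] using h)
    simpa [-List.ofFn_succ] using h6
  refine ⟨σ, hcyc, h2, ?_, hch⟩
  set G := Subgroup.closure (Set.range σ) with hG
  have hmem : ∀ i, σ i ∈ G := fun i => Subgroup.subset_closure ⟨i, rfl⟩
  obtain ⟨p0, hp0⟩ : (σ 0).support.Nonempty := by
    rw [← Finset.card_pos, (hcyc 0).2]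
    have := he 0
    omega
  have hstep : ∀ i, ∀ x ∈ (σ i).support, ∀ y ∈ (σ i).support, ∃ τ ∈ G, τ x = y := by
    intro i x hx y hy
    obtain ⟨k, hk⟩ := (hcyc i).1.exists_zpow_eq (by simpa using hx) (by simpa using hy)
    exact ⟨_, G.zpow_mem (hmem i) k, hk⟩
  have hreach : ∀ i : ℕ, ∀ h : i < m + 2, ∀ y ∈ (σ ⟨i, h⟩).support, ∃ τ ∈ G, τ p0 = y := by
    intro i
    induction i with
    | zero => intro h y hy; exact hstep 0 p0 hp0 y hy
    | succ i ih =>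
      intro h y hy
      obtain ⟨q, hq⟩ := hch i h
      rw [Finset.mem_inter] at hq
      obtain ⟨τ, hτ, hτq⟩ := ih (by omega) q hq.1
      obtain ⟨ρ, hρ, hρy⟩ := hstep _ q hq.2 y hy
      exact ⟨ρ * τ, G.mul_mem hρ hτ, by simp [hτq, hρy]⟩
  have hall : ∀ y, ∃ τ ∈ G, τ p0 = y := by
    intro y
    obtain ⟨p, hp, hy⟩ := h4 y (Finset.mem_univ y)
    rw [List.mem_ofFn] at hp
    obtain ⟨i, rfl⟩ := hp
    exact hreach i i.2 y hy
  intro a b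
  obtain ⟨τ, hτ, rfl⟩ := hall a
  obtain ⟨ρ, hρ, rfl⟩ := hall b
  exact ⟨ρ * τ⁻¹, G.mul_mem hρ (G.inv_mem hτ), by simp⟩
end
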